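/- arXiv:2306.11621 — 11 statements merged into one kernel-verified Lean document; each statement's English description precedes it below -/
import Mathlib

section
/- Suppose G is a unitary 1-design, that there exist group elements g_0, …, g_{d-1} ∈ G such that the vectors |i⟩ := g_i|0⟩ form an orthonormal basis of ℂ^d, and that Π_G ≠ 0. Then there exists a vector |Φ⟩ ∈ H_P with Π_G|Φ⟩ ≠ 0 such that the linear map E : ℂ^d → H_P defined on this basis by E(|i⟩) = N · ∑_{g∈G} ⟨0|g†|i⟩ ρ(g)|Φ⟩, where N = (d/|G|)/‖Π_G|Φ⟩‖, satisfies E(U|ψ⟩) = ρ(U) E(|ψ⟩) for every U ∈ G and every |ψ⟩ ∈ ℂ^d. -/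
open scoped ComplexConjugate ComplexInnerProductSpace

noncomputable section

/-- The matrix underlying an element of a subgroup `G` of the unitary group. -/
def gMat {d : ℕ} {G : Subgroup (Matrix.unitaryGroup (Fin d) ℂ)} (g : G) :
    Matrix (Fin d) (Fin d) ℂ :=
  ((g : Matrix.unitaryGroup (Fin d) ℂ) : Matrix (Fin d) (Fin d) ℂ)

/-- The distinguished vector `|0⟩ = e₀` of `ℂ^d`. -/
def e0 (d : ℕ) [NeZero d] : EuclideanSpace ℂ (Fin d) := EuclideanSpace.single 0 1

/-- Action of an element of `G` on `ℂ^d`. -/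
def gAct {d : ℕ} {G : Subgroup (Matrix.unitaryGroup (Fin d) ℂ)} (g : G)
    (v : EuclideanSpace ℂ (Fin d)) : EuclideanSpace ℂ (Fin d) :=
  Matrix.toEuclideanLin (gMat g) v

/-- `G` is a unitary 1-design. -/
def IsUnitaryOneDesign {d : ℕ} (G : Subgroup (Matrix.unitaryGroup (Fin d) ℂ)) [Fintype G] :
    Prop :=
  ∀ A : Matrix (Fin d) (Fin d) ℂ,
    (Fintype.card G : ℂ)⁻¹ • ∑ g : G, gMat g * A * star (gMat g) = (A.trace / d) • 1

/-- The operator `Π_G := (d/|G|) ∑_{g∈G} ⟨0|g†|0⟩ ρ(g)`. -/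
def PiG {d : ℕ} [NeZero d] (G : Subgroup (Matrix.unitaryGroup (Fin d) ℂ)) [Fintype G]
    {H_P : Type*} [NormedAddCommGroup H_P] [InnerProductSpace ℂ H_P] [CompleteSpace H_P]
    (ρ : G →* unitary (H_P →L[ℂ] H_P)) : H_P →L[ℂ] H_P :=
  ((d : ℂ) / (Fintype.card G : ℂ)) •
    ∑ g : G, (starRingEnd ℂ) (gMat g 0 0) • ((ρ g : H_P →L[ℂ] H_P))


theorem gAct_mul_aux {d : ℕ} {G : Subgroup (Matrix.unitaryGroup (Fin d) ℂ)} (g h : G)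
    (v : EuclideanSpace ℂ (Fin d)) : gAct (g * h) v = gAct g (gAct h v) := by
  simp [gAct, gMat, Matrix.toLpLin_apply, Matrix.mulVec_mulVec]

theorem gAct_inner_aux {d : ℕ} {G : Subgroup (Matrix.unitaryGroup (Fin d) ℂ)} (g : G)
    (v w : EuclideanSpace ℂ (Fin d)) : ⟪gAct g v, gAct g w⟫ = ⟪v, w⟫ := by
  unfold gAct
  rw [← LinearMap.adjoint_inner_right, ← Matrix.toEuclideanLin_conjTranspose_eq_adjoint]
  have h : (gMat g).conjTranspose * gMat g = 1 :=
    Matrix.mem_unitaryGroup_iff'.1 (g : Matrix.unitaryGroup (Fin d) ℂ).2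
  simp [Matrix.toLpLin_apply, Matrix.mulVec_mulVec, h]

/-- Main lemma: if `G` is a unitary 1-design, `{g_i |0⟩}` is an orthonormal basis of `ℂ^d`,
and `Π_G ≠ 0`, then there is a state `|Φ⟩` with `Π_G |Φ⟩ ≠ 0` such that the encoding
`E(|i⟩) = N ∑_g ⟨0|g†|i⟩ ρ(g)|Φ⟩` (with `N = (d/|G|)/‖Π_G|Φ⟩‖`) is `G`-equivariant. -/
theorem encoding_exists (d : ℕ) [NeZero d]
    (G : Subgroup (Matrix.unitaryGroup (Fin d) ℂ)) [Fintype G]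
    {H_P : Type*} [NormedAddCommGroup H_P] [InnerProductSpace ℂ H_P] [CompleteSpace H_P]
    (ρ : G →* unitary (H_P →L[ℂ] H_P))
    (hdesign : IsUnitaryOneDesign G)
    (gs : Fin d → G)
    (hbasis : Orthonormal ℂ (fun i : Fin d => gAct (gs i) (e0 d)))
    (hPiG : PiG G ρ ≠ 0) :
    ∃ Φ : H_P, PiG G ρ Φ ≠ 0 ∧
      ∃ E : EuclideanSpace ℂ (Fin d) →ₗ[ℂ] H_P,
        (∀ i : Fin d,
          E (gAct (gs i) (e0 d)) =
            (((d : ℂ) / (Fintype.card G : ℂ)) / (‖PiG G ρ Φ‖ : ℂ)) •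
              ∑ g : G, ⟪gAct g (e0 d), gAct (gs i) (e0 d)⟫ • ((ρ g : H_P →L[ℂ] H_P) Φ)) ∧
        (∀ (U : G) (ψ : EuclideanSpace ℂ (Fin d)),
          E (gAct U ψ) = (ρ U : H_P →L[ℂ] H_P) (E ψ)) := by
  obtain ⟨Φ, hΦ⟩ : ∃ Φ, PiG G ρ Φ ≠ 0 := by
    by_contra! h
    exact hPiG (ContinuousLinearMap.ext fun x => by simpa using h x)
  refine ⟨Φ, hΦ, (((d : ℂ) / (Fintype.card G : ℂ)) / (‖PiG G ρ Φ‖ : ℂ)) •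
    ∑ g : G, (innerSL ℂ (gAct g (e0 d))).toLinearMap.smulRight ((ρ g : H_P →L[ℂ] H_P) Φ),
    ?_, ?_⟩
  · intro i
    simp [LinearMap.sum_apply]
  · intro U ψ
    simp only [LinearMap.smul_apply, LinearMap.sum_apply, LinearMap.smulRight_apply,
      ContinuousLinearMap.coe_coe, innerSL_apply_apply, map_smul, map_sum]
    congr 1
    rw [← Equiv.sum_comp (Equiv.mulLeft U)]
    refine Finset.sum_congr rfl fun g _ => ?_
    simp only [Equiv.coe_mulLeft, gAct_mul_aux, gAct_inner_aux, map_mul]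
    rfl

end
end

section
/- If G is a unitary 1-design, then the operator Π_G is idempotent: Π_G² = Π_G. -/
open scoped ComplexConjugate

noncomputable section

theorem design_entry {d : ℕ} [NeZero d]
    (G : Subgroup (Matrix.unitaryGroup (Fin d) ℂ)) [Fintype G]
    (hdesign : IsUnitaryOneDesign G) (j : Fin d) :
    ∑ g : G, gMat g j 0 * (starRingEnd ℂ) (gMat g 0 0)
      = if j = 0 then (Fintype.card G : ℂ) / d else 0 := by
  have h := congrFun (congrFun (hdesign (Matrix.single 0 0 1)) j) 0
  have hc : (Fintype.card G : ℂ) ≠ 0 := by exact_mod_cast Fintype.card_ne_zero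
  have e : ∀ g : G, (gMat g * (Matrix.single 0 0 1 : Matrix (Fin d) (Fin d) ℂ) * star (gMat g)) j 0
      = gMat g j 0 * (starRingEnd ℂ) (gMat g 0 0) := by
    intro g
    rw [Matrix.mul_apply, Finset.sum_eq_single 0]
    · simp [Matrix.star_apply]
    · intro b _ hb
      simp [Matrix.mul_apply, Matrix.single_apply, hb.symm]
    · simp
  simp only [Matrix.smul_apply, Matrix.sum_apply, e, smul_eq_mul, Matrix.one_apply,
    Matrix.trace_single_eq_same] at h
  rw [inv_mul_eq_iff_eq_mul₀ hc] at h
  rw [h]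
  split_ifs <;> simp [div_eq_mul_inv]

theorem conv_entry {d : ℕ} [NeZero d]
    (G : Subgroup (Matrix.unitaryGroup (Fin d) ℂ)) [Fintype G]
    (hdesign : IsUnitaryOneDesign G) (k : G) :
    ∑ g : G, (starRingEnd ℂ) (gMat g 0 0) * (starRingEnd ℂ) (gMat (g⁻¹ * k) 0 0)
      = (Fintype.card G : ℂ) / d * (starRingEnd ℂ) (gMat k 0 0) := by
  have e : ∀ g : G, (starRingEnd ℂ) (gMat (g⁻¹ * k) 0 0)
      = ∑ j, gMat g j 0 * (starRingEnd ℂ) (gMat k j 0) := by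
    intro g
    have : gMat (g⁻¹ * k) = star (gMat g) * gMat k := rfl
    rw [this, Matrix.mul_apply, map_sum]
    simp [Matrix.star_apply]
  simp only [e, Finset.mul_sum]
  rw [Finset.sum_comm]
  have e2 : ∀ j, ∑ g : G, (starRingEnd ℂ) (gMat g 0 0) *
      (gMat g j 0 * (starRingEnd ℂ) (gMat k j 0))
      = (if j = 0 then (Fintype.card G : ℂ) / d else 0) * (starRingEnd ℂ) (gMat k j 0) := by
    intro j
    rw [← design_entry G hdesign j, Finset.sum_mul]
    exact Finset.sum_congr rfl fun g _ => by ring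
  simp [e2]

/-- If `G` is a unitary 1-design, then `Π_G` is idempotent. -/
theorem piG_idempotent (d : ℕ) [NeZero d]
    (G : Subgroup (Matrix.unitaryGroup (Fin d) ℂ)) [Fintype G]
    {H_P : Type*} [NormedAddCommGroup H_P] [InnerProductSpace ℂ H_P] [CompleteSpace H_P]
    (ρ : G →* unitary (H_P →L[ℂ] H_P))
    (hdesign : IsUnitaryOneDesign G) :
    PiG G ρ ^ 2 = PiG G ρ := by
  have hc : (Fintype.card G : ℂ) ≠ 0 := by exact_mod_cast Fintype.card_ne_zero
  have hd : (d : ℂ) ≠ 0 := by exact_mod_cast NeZero.ne d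
  have key : (∑ g : G, (starRingEnd ℂ) (gMat g 0 0) • ((ρ g : H_P →L[ℂ] H_P))) *
      (∑ g : G, (starRingEnd ℂ) (gMat g 0 0) • ((ρ g : H_P →L[ℂ] H_P)))
      = ((Fintype.card G : ℂ) / d) •
        ∑ g : G, (starRingEnd ℂ) (gMat g 0 0) • ((ρ g : H_P →L[ℂ] H_P)) := by
    rw [Finset.sum_mul_sum]
    have e : ∀ g : G, ∑ h : G, ((starRingEnd ℂ) (gMat g 0 0) • ((ρ g : H_P →L[ℂ] H_P))) *
        ((starRingEnd ℂ) (gMat h 0 0) • ((ρ h : H_P →L[ℂ] H_P)))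
        = ∑ k : G, ((starRingEnd ℂ) (gMat g 0 0) * (starRingEnd ℂ) (gMat (g⁻¹ * k) 0 0)) •
          ((ρ k : H_P →L[ℂ] H_P)) := by
      intro g
      rw [← Equiv.sum_comp (Equiv.mulLeft g⁻¹)]
      refine Finset.sum_congr rfl fun k _ => ?_
      have hk : (ρ k : H_P →L[ℂ] H_P) = ρ g * ρ (g⁻¹ * k) := by
        rw [← Submonoid.coe_mul, ← map_mul, mul_inv_cancel_left]
      rw [Equiv.coe_mulLeft, smul_mul_smul_comm, hk]
    simp only [e]
    rw [Finset.sum_comm, Finset.smul_sum]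
    refine Finset.sum_congr rfl fun k _ => ?_
    rw [← Finset.sum_smul, conv_entry G hdesign k, mul_smul]
  unfold PiG
  rw [sq, smul_mul_smul_comm, key, smul_smul]
  congr 1
  field_simp

end
end

section
/- Suppose G is a unitary 1-design and |Φ⟩ ∈ H_P satisfies Π_G|Φ⟩ ≠ 0. Set |0̄⟩ := Π_G|Φ⟩ / ‖Π_G|Φ⟩‖. Then for every g ∈ G, the overlap ⟨0̄|ρ(g)|0̄⟩ equals the matrix element ⟨0|g|0⟩ (the (0,0) entry of the matrix g). -/
open scoped ComplexConjugate ComplexInnerProductSpace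

noncomputable section

theorem sum_aux (d : ℕ) [NeZero d]
    (G : Subgroup (Matrix.unitaryGroup (Fin d) ℂ)) [Fintype G]
    (hdesign : IsUnitaryOneDesign G) (h k : G) :
    ∑ a : G, gMat a 0 0 * (starRingEnd ℂ) (gMat (h⁻¹ * a * k) 0 0) =
      (Fintype.card G : ℂ) / d * (gMat h 0 0 * (starRingEnd ℂ) (gMat k 0 0)) := by
  have hc : (Fintype.card G : ℂ) ≠ 0 := Nat.cast_ne_zero.mpr Fintype.card_ne_zero
  have key := hdesign (Matrix.single 0 0 (1 : ℂ) * star (gMat k))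
  have key2 : ∑ g : G, gMat g * (Matrix.single 0 0 (1 : ℂ) * star (gMat k)) * star (gMat g)
      = (Fintype.card G : ℂ) • ((((Matrix.single 0 0 (1 : ℂ) : Matrix (Fin d) (Fin d) ℂ) * star (gMat k)).trace / d) •
        (1 : Matrix (Fin d) (Fin d) ℂ)) := by
    rw [← key, smul_smul, mul_inv_cancel₀ hc, one_smul]
  have key3 := congrArg (fun M : Matrix (Fin d) (Fin d) ℂ => (M * gMat h) 0 0) key2
  have ht : ((Matrix.single 0 0 (1 : ℂ) : Matrix (Fin d) (Fin d) ℂ) * star (gMat k)).trace = (starRingEnd ℂ) (gMat k 0 0) := by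
    rw [Matrix.trace_single_mul]
    simp [Matrix.star_apply]
  simp only [ht, Finset.sum_mul, Matrix.sum_apply, Matrix.smul_mul, Matrix.one_mul,
    Matrix.smul_apply, smul_eq_mul] at key3
  rw [show (Fintype.card G : ℂ) / d * (gMat h 0 0 * (starRingEnd ℂ) (gMat k 0 0)) =
    Fintype.card G * ((starRingEnd ℂ) (gMat k 0 0) / d * gMat h 0 0) by ring, ← key3]
  refine Finset.sum_congr rfl fun a _ => ?_
  have e1 : (starRingEnd ℂ) (gMat (h⁻¹ * a * k) 0 0) =
      (star (gMat k) * star (gMat a) * gMat h) 0 0 := by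
    have : star (gMat k) * star (gMat a) * gMat h = star (gMat (h⁻¹ * a * k)) := by
      have : gMat (h⁻¹ * a * k) = star (gMat h) * gMat a * gMat k := rfl
      rw [this, star_mul, star_mul, star_star, mul_assoc]
    rw [this, Matrix.star_apply]; rfl
  rw [e1]
  have e2 : gMat a * (Matrix.single 0 0 (1 : ℂ) * star (gMat k)) * star (gMat a) * gMat h =
      (gMat a * Matrix.single 0 0 (1 : ℂ)) * (star (gMat k) * star (gMat a) * gMat h) := by
    simp only [mul_assoc]
  rw [e2]
  generalize star (gMat k) * star (gMat a) * gMat h = N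
  rw [Matrix.mul_apply, Finset.sum_eq_single 0]
  · simp
  · intro b _ hb
    rw [Matrix.mul_single_apply_of_ne (hbj := hb)]; simp
  · simp

theorem inner_aux (d : ℕ) [NeZero d]
    (G : Subgroup (Matrix.unitaryGroup (Fin d) ℂ)) [Fintype G]
    {H_P : Type*} [NormedAddCommGroup H_P] [InnerProductSpace ℂ H_P] [CompleteSpace H_P]
    (ρ : G →* unitary (H_P →L[ℂ] H_P))
    (hdesign : IsUnitaryOneDesign G) (Φ : H_P) (h : G) :
    ⟪PiG G ρ Φ, (ρ h : H_P →L[ℂ] H_P) (PiG G ρ Φ)⟫ = gMat h 0 0 * ⟪Φ, PiG G ρ Φ⟫ := by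
  have hc : (Fintype.card G : ℂ) ≠ 0 := Nat.cast_ne_zero.mpr Fintype.card_ne_zero
  have hd : (d : ℂ) ≠ 0 := Nat.cast_ne_zero.mpr (NeZero.ne d)
  have hP : PiG G ρ Φ = ((d : ℂ) / (Fintype.card G : ℂ)) •
      ∑ g : G, (starRingEnd ℂ) (gMat g 0 0) • (ρ g : H_P →L[ℂ] H_P) Φ := by
    simp [PiG]
  have hin : ∀ a k : G, ⟪(ρ a : H_P →L[ℂ] H_P) Φ, (ρ h : H_P →L[ℂ] H_P)
      ((ρ (h⁻¹ * a * k) : H_P →L[ℂ] H_P) Φ)⟫ = ⟪Φ, (ρ k : H_P →L[ℂ] H_P) Φ⟫ := by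
    intro a k
    have e : (ρ h : H_P →L[ℂ] H_P) ((ρ (h⁻¹ * a * k) : H_P →L[ℂ] H_P) Φ) =
        (ρ a : H_P →L[ℂ] H_P) ((ρ k : H_P →L[ℂ] H_P) Φ) := by
      have : ρ h * ρ (h⁻¹ * a * k) = ρ a * ρ k := by
        rw [← map_mul, ← map_mul]; congr 1; group
      exact congrArg (fun u : unitary (H_P →L[ℂ] H_P) => (u : H_P →L[ℂ] H_P) Φ) this
    rw [e, ← ContinuousLinearMap.adjoint_inner_right]
    have : star (ρ a : H_P →L[ℂ] H_P) * (ρ a : H_P →L[ℂ] H_P) = 1 :=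
      Unitary.coe_star_mul_self (ρ a)
    have := congrArg (fun u : H_P →L[ℂ] H_P => u ((ρ k : H_P →L[ℂ] H_P) Φ)) this
    exact congrArg (fun x => ⟪Φ, x⟫) this
  rw [hP]
  simp only [map_smul, map_sum, inner_smul_left, inner_smul_right, sum_inner, inner_sum,
    map_div₀, map_natCast, Complex.conj_conj]
  have h1 : ∀ a : G, ∑ b : G, (starRingEnd ℂ) (gMat b 0 0) * (gMat a 0 0 *
      ⟪(ρ a : H_P →L[ℂ] H_P) Φ, (ρ h : H_P →L[ℂ] H_P) ((ρ b : H_P →L[ℂ] H_P) Φ)⟫) =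
      ∑ k : G, (gMat a 0 0 * (starRingEnd ℂ) (gMat (h⁻¹ * a * k) 0 0)) *
        ⟪Φ, (ρ k : H_P →L[ℂ] H_P) Φ⟫ := by
    intro a
    rw [← Equiv.sum_comp (Equiv.mulLeft (h⁻¹ * a))]
    refine Finset.sum_congr rfl fun k _ => ?_
    rw [Equiv.coe_mulLeft, hin]; ring
  have h2 : ∑ a : G, ∑ b : G, (starRingEnd ℂ) (gMat b 0 0) * (gMat a 0 0 *
      ⟪(ρ a : H_P →L[ℂ] H_P) Φ, (ρ h : H_P →L[ℂ] H_P) ((ρ b : H_P →L[ℂ] H_P) Φ)⟫) =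
      (Fintype.card G : ℂ) / d * gMat h 0 0 *
      ∑ k : G, (starRingEnd ℂ) (gMat k 0 0) * ⟪Φ, (ρ k : H_P →L[ℂ] H_P) Φ⟫ := by
    simp_rw [h1]
    rw [Finset.sum_comm, Finset.mul_sum]
    refine Finset.sum_congr rfl fun k _ => ?_
    rw [← Finset.sum_mul, sum_aux d G hdesign]; ring
  have h3 := h2
  rw [Finset.sum_comm] at h3
  have h4 := congrArg (fun z => ((d : ℂ) / (Fintype.card G : ℂ)) ^ 2 * z) h3
  simp only [Finset.mul_sum] at h4 ⊢
  refine Eq.trans ?_ (h4.trans ?_)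
  · refine Finset.sum_congr rfl fun x _ => Finset.sum_congr rfl fun y _ => ?_
    ring
  · refine Finset.sum_congr rfl fun x _ => ?_
    field_simp

/-- If `G` is a unitary 1-design and `Π_G|Φ⟩ ≠ 0`, with `|0̄⟩ := Π_G|Φ⟩/‖Π_G|Φ⟩‖`,
then `⟨0̄|ρ(g)|0̄⟩ = ⟨0|g|0⟩` for every `g ∈ G`. -/
theorem overlap_eq_matrix_element (d : ℕ) [NeZero d]
    (G : Subgroup (Matrix.unitaryGroup (Fin d) ℂ)) [Fintype G]
    {H_P : Type*} [NormedAddCommGroup H_P] [InnerProductSpace ℂ H_P] [CompleteSpace H_P]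
    (ρ : G →* unitary (H_P →L[ℂ] H_P))
    (hdesign : IsUnitaryOneDesign G)
    (Φ : H_P) (hΦ : PiG G ρ Φ ≠ 0)
    (zerobar : H_P) (hzerobar : zerobar = (‖PiG G ρ Φ‖ : ℂ)⁻¹ • PiG G ρ Φ) :
    ∀ g : G, ⟪zerobar, (ρ g : H_P →L[ℂ] H_P) zerobar⟫ = gMat g 0 0 := by
  intro g
  have h1 := inner_aux d G ρ hdesign Φ 1
  have h2 := inner_aux d G ρ hdesign Φ g
  have hone : gMat (1 : G) 0 0 = 1 := by simp [gMat]
  have hr : ((ρ 1 : unitary (H_P →L[ℂ] H_P)) : H_P →L[ℂ] H_P) (PiG G ρ Φ) = PiG G ρ Φ := by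
    simp
  rw [hr, hone, one_mul, inner_self_eq_norm_sq_to_K] at h1
  rw [← h1] at h2
  have hn : (‖PiG G ρ Φ‖ : ℂ) ≠ 0 := by simpa using hΦ
  rw [hzerobar, map_smul, inner_smul_left, inner_smul_right, h2, map_inv₀, Complex.conj_ofReal]
  simp only [Complex.coe_algebraMap]
  field_simp

end
end

section
/- Suppose G is a unitary 1-design, that g_0, …, g_{d-1} ∈ G are such that the vectors |i⟩ := g_i|0⟩ form an orthonormal basis of ℂ^d, and that |Φ⟩ ∈ H_P satisfies Π_G|Φ⟩ ≠ 0. Define |ī⟩ := N ∑_{g∈G} ⟨0|g†|i⟩ ρ(g)|Φ⟩ with N = (d/|G|)/‖Π_G|Φ⟩‖. Then the family (|ī⟩)_{i=0,…,d−1} is an orthonormal family in H_P; equivalently, the linear map E : ℂ^d → H_P sending |i⟩ to |ī⟩ is an isometry. -/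
open scoped ComplexConjugate ComplexInnerProductSpace

noncomputable section

section helpers

variable {d : ℕ} [NeZero d] {G : Subgroup (Matrix.unitaryGroup (Fin d) ℂ)}

theorem gAct_e0_apply (g : G) (k : Fin d) : gAct g (e0 d) k = gMat g k 0 := by
  simp [gAct, e0, Matrix.toLpLin_apply]

theorem gMat_mul (g h : G) : gMat (g * h) = gMat g * gMat h := by
  simp [gMat]

theorem gMat_inv (g : G) : gMat (g⁻¹) = star (gMat g) := by
  simp [gMat]

variable [Fintype G] {H_P : Type*} [NormedAddCommGroup H_P] [InnerProductSpace ℂ H_P]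
  [CompleteSpace H_P] (ρ : G →* unitary (H_P →L[ℂ] H_P)) (Φ : H_P)

/-- Unnormalised encoding of the standard basis. -/
def encF (j : Fin d) : H_P :=
  ∑ g : G, (starRingEnd ℂ) (gMat g j 0) • ((ρ g : H_P →L[ℂ] H_P) Φ)

theorem PiG_apply_eq : PiG G ρ Φ = ((d : ℂ) / (Fintype.card G : ℂ)) • encF ρ Φ 0 := by
  simp [PiG, encF, ContinuousLinearMap.sum_apply]

theorem enc_eq (v : EuclideanSpace ℂ (Fin d)) :
    ∑ g : G, ⟪gAct g (e0 d), v⟫ • ((ρ g : H_P →L[ℂ] H_P) Φ) = ∑ k, v k • encF ρ Φ k := by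
  simp only [encF, Finset.smul_sum, PiLp.inner_apply, Finset.sum_smul, gAct_e0_apply, smul_smul]
  rw [Finset.sum_comm]
  simp [mul_comm]

theorem rho_encF (h : G) (j : Fin d) :
    (ρ h : H_P →L[ℂ] H_P) (encF ρ Φ j) = ∑ k, gMat h k j • encF ρ Φ k := by
  have h1 : (ρ h : H_P →L[ℂ] H_P) (encF ρ Φ j)
      = ∑ g : G, (starRingEnd ℂ) (gMat g j 0) • ((ρ (h * g) : H_P →L[ℂ] H_P) Φ) := by
    simp [encF, map_sum]
  rw [h1, ← Equiv.sum_comp (Equiv.mulLeft h⁻¹)]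
  simp only [Equiv.coe_mulLeft, mul_inv_cancel_left, encF, Finset.smul_sum, smul_smul]
  rw [Finset.sum_comm]
  refine Finset.sum_congr rfl fun g _ => ?_
  rw [← Finset.sum_smul]
  congr 1
  rw [gMat_mul, gMat_inv, Matrix.mul_apply, map_sum]
  simp [Matrix.star_apply]

theorem rho_inner (h : G) (x y : H_P) :
    ⟪(ρ h : H_P →L[ℂ] H_P) x, (ρ h : H_P →L[ℂ] H_P) y⟫ = ⟪x, y⟫ := by
  rw [← ContinuousLinearMap.adjoint_inner_right, ← ContinuousLinearMap.star_eq_adjoint,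
    ← ContinuousLinearMap.mul_apply, Unitary.coe_star_mul_self, ContinuousLinearMap.one_apply]

theorem gram_inv (h : G) :
    star (gMat h) * (Matrix.of fun j k => ⟪encF ρ Φ j, encF ρ Φ k⟫) * gMat h
      = Matrix.of fun j k => ⟪encF ρ Φ j, encF ρ Φ k⟫ := by
  ext j k
  rw [Matrix.of_apply, ← rho_inner ρ h, rho_encF, rho_encF, Matrix.mul_apply]
  simp only [sum_inner, inner_sum, inner_smul_left, inner_smul_right, Matrix.mul_apply,
    Matrix.of_apply, Matrix.star_apply, Finset.sum_mul, Finset.mul_sum]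
  refine Finset.sum_congr rfl fun a _ => Finset.sum_congr rfl fun b _ => ?_
  simp only [RCLike.star_def]
  ring

theorem gram_eq (hdesign : IsUnitaryOneDesign G) (j k : Fin d) :
    ⟪encF ρ Φ j, encF ρ Φ k⟫ = if j = k then (‖encF ρ Φ 0‖ : ℂ) ^ 2 else 0 := by
  have key := hdesign (Matrix.of fun j k => ⟪encF ρ Φ j, encF ρ Φ k⟫)
  have h2 : ∀ g : G, gMat g * (Matrix.of fun j k => ⟪encF ρ Φ j, encF ρ Φ k⟫) * star (gMat g)
      = Matrix.of fun j k => ⟪encF ρ Φ j, encF ρ Φ k⟫ := by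
    intro g
    have := gram_inv ρ Φ g⁻¹
    rwa [gMat_inv, star_star] at this
  have hc : (Fintype.card G : ℂ) ≠ 0 := by exact_mod_cast Fintype.card_ne_zero
  simp only [h2, Finset.sum_const, Finset.card_univ] at key
  rw [← Nat.cast_smul_eq_nsmul ℂ, smul_smul, inv_mul_cancel₀ hc, one_smul] at key
  generalize Matrix.trace (Matrix.of fun j k : Fin d => ⟪encF ρ Φ j, encF ρ Φ k⟫) / (d : ℂ) = t at key
  have e1 := congrFun (congrFun key j) k
  have e0 := congrFun (congrFun key 0) 0
  simp only [Matrix.of_apply, Matrix.smul_apply, Matrix.one_apply, if_true, smul_eq_mul,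
    mul_one] at e0 e1
  rw [e1, ← e0, inner_self_eq_norm_sq_to_K]
  simp

end helpers

/-- With the encoding `|ī⟩ := N ∑_g ⟨0|g†|i⟩ ρ(g)|Φ⟩`, `N = (d/|G|)/‖Π_G|Φ⟩‖`, the family
`(|ī⟩)_i` is orthonormal in the physical space, i.e. the encoding is an isometry. -/
theorem encoded_basis_orthonormal (d : ℕ) [NeZero d]
    (G : Subgroup (Matrix.unitaryGroup (Fin d) ℂ)) [Fintype G]
    {H_P : Type*} [NormedAddCommGroup H_P] [InnerProductSpace ℂ H_P] [CompleteSpace H_P]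
    (ρ : G →* unitary (H_P →L[ℂ] H_P))
    (hdesign : IsUnitaryOneDesign G)
    (gs : Fin d → G)
    (hbasis : Orthonormal ℂ (fun i : Fin d => gAct (gs i) (e0 d)))
    (Φ : H_P) (hΦ : PiG G ρ Φ ≠ 0)
    (ibar : Fin d → H_P)
    (hibar : ∀ i : Fin d,
      ibar i = (((d : ℂ) / (Fintype.card G : ℂ)) / (‖PiG G ρ Φ‖ : ℂ)) •
        ∑ g : G, ⟪gAct g (e0 d), gAct (gs i) (e0 d)⟫ • ((ρ g : H_P →L[ℂ] H_P) Φ)) :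
    Orthonormal ℂ ibar := by
  have hc : (Fintype.card G : ℂ) ≠ 0 := by exact_mod_cast Fintype.card_ne_zero
  set c : ℂ := (d : ℂ) / (Fintype.card G : ℂ) with hcdef
  have hP : PiG G ρ Φ = c • encF ρ Φ 0 := PiG_apply_eq ρ Φ
  have hn : ‖PiG G ρ Φ‖ = ‖c‖ * ‖encF ρ Φ 0‖ := by rw [hP, norm_smul]
  have hne : ‖PiG G ρ Φ‖ ≠ 0 := norm_ne_zero_iff.mpr hΦ
  rw [hn] at hne
  have hc0 : (‖c‖ : ℂ) ≠ 0 := by exact_mod_cast left_ne_zero_of_mul hne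
  have hf0 : (‖encF ρ Φ 0‖ : ℂ) ≠ 0 := by exact_mod_cast right_ne_zero_of_mul hne
  rw [orthonormal_iff_ite] at hbasis ⊢
  intro i j
  rw [← hbasis i j, hibar, hibar, enc_eq, enc_eq, inner_smul_left, inner_smul_right, hn]
  have hB : ⟪∑ k, gAct (gs i) (e0 d) k • encF ρ Φ k, ∑ k, gAct (gs j) (e0 d) k • encF ρ Φ k⟫
      = (‖encF ρ Φ 0‖ : ℂ) ^ 2 * ⟪gAct (gs i) (e0 d), gAct (gs j) (e0 d)⟫ := by
    simp only [sum_inner, inner_sum, inner_smul_left, inner_smul_right, gram_eq ρ Φ hdesign,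
      PiLp.inner_apply, Finset.mul_sum]
    simp
    refine Finset.sum_congr rfl fun a _ => ?_
    ring
  rw [hB]
  have hcc : (starRingEnd ℂ) c * c = (‖c‖ : ℂ) ^ 2 := Complex.conj_mul' c
  simp only [map_div₀, Complex.conj_ofReal]
  push_cast
  field_simp
  linear_combination ⟪gAct (gs i) (e0 d), gAct (gs j) (e0 d)⟫ * hcc

end
end

section
/- Suppose G is a unitary 1-design and E' : ℂ^d → H_P is a linear map satisfying the equivariance condition E'(g|ψ⟩) = ρ(g) E'(|ψ⟩) for all g ∈ G and all |ψ⟩ ∈ ℂ^d, and such that E'(|0⟩) is a unit vector. Then every encoding of this form is given by the construction of the main lemma: for every |ψ⟩ ∈ ℂ^d, E'(|ψ⟩) = (d/|G|) ∑_{g∈G} ⟨0|g†|ψ⟩ ρ(g) E'(|0⟩). -/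
open scoped ComplexConjugate ComplexInnerProductSpace

noncomputable section

/-- Any `G`-equivariant linear encoding `E'` with `E'(|0⟩)` a unit vector is given by the
construction of the main lemma: `E'(|ψ⟩) = (d/|G|) ∑_g ⟨0|g†|ψ⟩ ρ(g) E'(|0⟩)`. -/
theorem equivariant_encoding_eq (d : ℕ) [NeZero d]
    (G : Subgroup (Matrix.unitaryGroup (Fin d) ℂ)) [Fintype G]
    {H_P : Type*} [NormedAddCommGroup H_P] [InnerProductSpace ℂ H_P] [CompleteSpace H_P]
    (ρ : G →* unitary (H_P →L[ℂ] H_P))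
    (hdesign : IsUnitaryOneDesign G)
    (E' : EuclideanSpace ℂ (Fin d) →ₗ[ℂ] H_P)
    (hequiv : ∀ (g : G) (ψ : EuclideanSpace ℂ (Fin d)),
      E' (gAct g ψ) = (ρ g : H_P →L[ℂ] H_P) (E' ψ))
    (hnorm : ‖E' (e0 d)‖ = 1) :
    ∀ ψ : EuclideanSpace ℂ (Fin d),
      E' ψ = ((d : ℂ) / (Fintype.card G : ℂ)) •
        ∑ g : G, ⟪gAct g (e0 d), ψ⟫ • ((ρ g : H_P →L[ℂ] H_P) (E' (e0 d))) := by
  intro ψ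
  have hG : (Fintype.card G : ℂ) ≠ 0 := Nat.cast_ne_zero.mpr Fintype.card_ne_zero
  have hd : (d : ℂ) ≠ 0 := Nat.cast_ne_zero.mpr (NeZero.ne d)
  have hact : ∀ (g : G) (i : Fin d), (gAct g (e0 d)) i = gMat g i 0 := by
    intro g i
    simp [gAct, e0, Matrix.toLpLin_apply]
  have hent : ∀ i k : Fin d, ∑ g : G, gMat g i 0 * (starRingEnd ℂ) (gMat g k 0)
      = (Fintype.card G : ℂ) / d * (1 : Matrix (Fin d) (Fin d) ℂ) i k := by
    intro i k
    have h := congrFun (congrFun (hdesign (Matrix.single 0 0 1)) i) k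
    have h2 : ∀ g : G, (gMat g * (Matrix.single 0 0 1 : Matrix (Fin d) (Fin d) ℂ) * star (gMat g) : Matrix (Fin d) (Fin d) ℂ) i k
        = gMat g i 0 * (starRingEnd ℂ) (gMat g k 0) := by
      intro g
      rw [Matrix.mul_apply, Finset.sum_eq_single 0]
      · simp [Matrix.star_apply]
      · intro b _ hb
        rw [Matrix.mul_single_apply_of_ne _ _ _ _ _ hb]
        simp
      · simp
    simp only [Matrix.smul_apply, Matrix.sum_apply, h2, smul_eq_mul,
      Matrix.trace_single_eq_same] at h
    rw [inv_mul_eq_iff_eq_mul₀ hG] at h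
    rw [h]
    ring
  have key : ψ = ((d : ℂ) / (Fintype.card G : ℂ)) •
      ∑ g : G, ⟪gAct g (e0 d), ψ⟫ • gAct g (e0 d) := by
    ext i
    have h3 : ∀ g : G, ⟪gAct g (e0 d), ψ⟫ * gMat g i 0
        = ∑ k, ψ k * (gMat g i 0 * (starRingEnd ℂ) (gMat g k 0)) := by
      intro g
      rw [PiLp.inner_apply, Finset.sum_mul]
      refine Finset.sum_congr rfl fun k _ => ?_
      rw [hact]
      simp only [RCLike.inner_apply]
      ring
    simp only [PiLp.smul_apply, WithLp.ofLp_sum, Finset.sum_apply, WithLp.ofLp_smul,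
      Pi.smul_apply, smul_eq_mul, hact, h3]
    rw [Finset.sum_comm]
    simp only [← Finset.mul_sum, hent, Matrix.one_apply]
    simp
    field_simp
  conv_lhs => rw [key]
  simp only [map_smul, map_sum, hequiv]

end
end

section
/- Suppose G is a unitary 1-design and E' : ℂ^d → H_P is a linear map satisfying E'(g|ψ⟩) = ρ(g) E'(|ψ⟩) for all g ∈ G and all |ψ⟩ ∈ ℂ^d. Then Π_G E'(|0⟩) = E'(|0⟩), i.e. the vector E'(|0⟩) is fixed by the projector Π_G. -/
open scoped ComplexConjugate ComplexInnerProductSpace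

noncomputable section

/-- For any `G`-equivariant linear encoding `E'`, the vector `E'(|0⟩)` is fixed by `Π_G`. -/
theorem piG_fixes_encoded_zero (d : ℕ) [NeZero d]
    (G : Subgroup (Matrix.unitaryGroup (Fin d) ℂ)) [Fintype G]
    {H_P : Type*} [NormedAddCommGroup H_P] [InnerProductSpace ℂ H_P] [CompleteSpace H_P]
    (ρ : G →* unitary (H_P →L[ℂ] H_P))
    (hdesign : IsUnitaryOneDesign G)
    (E' : EuclideanSpace ℂ (Fin d) →ₗ[ℂ] H_P)
    (hequiv : ∀ (g : G) (ψ : EuclideanSpace ℂ (Fin d)),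
      E' (gAct g ψ) = (ρ g : H_P →L[ℂ] H_P) (E' ψ)) :
    PiG G ρ (E' (e0 d)) = E' (e0 d) := by
  have hd : (d : ℂ) ≠ 0 := Nat.cast_ne_zero.mpr (NeZero.ne d)
  have key : ((d : ℂ) / (Fintype.card G : ℂ)) •
      ∑ g : G, (starRingEnd ℂ) (gMat g 0 0) • gAct g (e0 d) = e0 d := by
    ext i
    have h := congrFun (congrFun (hdesign (Matrix.single 0 0 1)) i) 0
    have h1 : ∀ g : G, (gMat g * (Matrix.single 0 0 1 : Matrix (Fin d) (Fin d) ℂ) * star (gMat g)) i 0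
        = (starRingEnd ℂ) (gMat g 0 0) * gMat g i 0 := by
      intro g
      rw [Matrix.mul_apply, Finset.sum_eq_single 0]
      · simp [Matrix.star_apply, mul_comm]
      · intro j _ hj
        rw [Matrix.mul_single_apply_of_ne (hbj := hj)]
        simp
      · simp
    have h2 : ∀ g : G, (gAct g (e0 d)) i = gMat g i 0 := by
      intro g
      simp [gAct, e0, Matrix.toLpLin_apply]
    simp only [Matrix.smul_apply, Matrix.sum_apply, h1, Matrix.trace_single_eq_same,
      smul_eq_mul] at h
    have h3 : (e0 d) i = (1 : Matrix (Fin d) (Fin d) ℂ) i 0 := by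
      simp [e0, Matrix.one_apply, Pi.single_apply]
    rw [h3]
    simp only [PiLp.smul_apply, WithLp.ofLp_sum, Finset.sum_apply, WithLp.ofLp_smul,
      Pi.smul_apply, smul_eq_mul, h2]
    rw [div_eq_mul_inv, mul_assoc, h]
    field_simp
  conv_rhs => rw [← key]
  simp [PiG, hequiv]

end
end

section
/- Suppose the scalar matrix z·1 belongs to G for some complex number z with |z| = 1, and suppose ρ(z·1) = w·Id_{H_P} for some complex scalar w with conj(z)·w ≠ 1. Then Π_G = 0. -/
open scoped ComplexConjugate ComplexInnerProductSpace

noncomputable section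

/-- If `z·1 ∈ G` for some unit-modulus `z` and `ρ(z·1) = w·Id` with `conj z · w ≠ 1`,
then `Π_G = 0`. -/
theorem piG_eq_zero (d : ℕ) [NeZero d]
    (G : Subgroup (Matrix.unitaryGroup (Fin d) ℂ)) [Fintype G]
    {H_P : Type*} [NormedAddCommGroup H_P] [InnerProductSpace ℂ H_P] [CompleteSpace H_P]
    (ρ : G →* unitary (H_P →L[ℂ] H_P))
    (z w : ℂ) (hz : ‖z‖ = 1)
    (u : Matrix.unitaryGroup (Fin d) ℂ)
    (hu : (u : Matrix (Fin d) (Fin d) ℂ) = z • 1)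
    (hmem : u ∈ G)
    (hw : ((ρ ⟨u, hmem⟩ : unitary (H_P →L[ℂ] H_P)) : H_P →L[ℂ] H_P) = w • 1)
    (hzw : (starRingEnd ℂ) z * w ≠ 1) :
    PiG G ρ = 0 := by
  have key : ∑ g : G, (starRingEnd ℂ) (gMat g 0 0) • ((ρ g : H_P →L[ℂ] H_P)) =
      ((starRingEnd ℂ) z * w) •
        ∑ g : G, (starRingEnd ℂ) (gMat g 0 0) • ((ρ g : H_P →L[ℂ] H_P)) := by
    conv_lhs => rw [← Equiv.sum_comp (Equiv.mulLeft (⟨u, hmem⟩ : G))]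
    rw [Finset.smul_sum]
    refine Finset.sum_congr rfl fun g _ => ?_
    have h1 : gMat ((⟨u, hmem⟩ : G) * g) = z • gMat g := by
      simp [gMat, hu]
    rw [Equiv.coe_mulLeft, h1, map_mul, Submonoid.coe_mul, hw, Matrix.smul_apply, smul_eq_mul,
      map_mul, smul_mul_assoc, one_mul, smul_smul, smul_smul]
    congr 1
    ring
  have h2 : (1 - (starRingEnd ℂ) z * w) •
      ∑ g : G, (starRingEnd ℂ) (gMat g 0 0) • ((ρ g : H_P →L[ℂ] H_P)) = 0 := by
    rw [sub_smul, one_smul, ← key, sub_self]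
  rcases smul_eq_zero.mp h2 with h | h
  · exact absurd (sub_eq_zero.mp h).symm hzw
  · rw [PiG, h, smul_zero]

end
end

section
/- Let μ be the Haar probability measure on the compact group SU(2) of 2×2 special unitary complex matrices. For all natural numbers m, n with m + n ≠ 1, and for all x, y ∈ ℂ, the integral ∫_{SU(2)} conj(g₀₀) · (g₀₀·x + g₀₁·y)^m · (g₁₀·x + g₁₁·y)^n dμ(g) equals 0, where g_{ij} denote the matrix entries of g. -/
open MeasureTheory
open scoped ComplexConjugate

noncomputable section

/-- `SU(2)`: the subgroup of the unitary group `U(2)` of matrices with determinant 1. -/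
def SU2 : Subgroup (Matrix.unitaryGroup (Fin 2) ℂ) where
  carrier := {g | (g : Matrix (Fin 2) (Fin 2) ℂ).det = 1}
  one_mem' := by simp
  mul_mem' := by
    intro a b ha hb
    simp only [Set.mem_setOf_eq, Submonoid.coe_mul, Matrix.det_mul] at *
    rw [ha, hb, one_mul]
  inv_mem' := by
    intro a ha
    simp only [Set.mem_setOf_eq] at *
    rw [← Unitary.star_eq_inv]
    show (star (a : Matrix (Fin 2) (Fin 2) ℂ)).det = 1
    rw [Matrix.star_eq_conjTranspose, Matrix.det_conjTranspose, ha, star_one]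

/-- The matrix underlying an element of `SU(2)`. -/
def su2Mat (g : SU2) : Matrix (Fin 2) (Fin 2) ℂ :=
  ((g : Matrix.unitaryGroup (Fin 2) ℂ) : Matrix (Fin 2) (Fin 2) ℂ)

theorem su2Mat_mul (g h : SU2) : su2Mat (g * h) = su2Mat g * su2Mat h := rfl

theorem continuous_su2Mat : Continuous su2Mat :=
  continuous_subtype_val.comp continuous_subtype_val

theorem continuous_su2Mat_apply (i j : Fin 2) : Continuous fun g => su2Mat g i j :=
  (continuous_apply_apply i j).comp continuous_su2Mat

theorem isClosedEmbedding_su2Mat : Topology.IsClosedEmbedding su2Mat := by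
  refine Topology.IsClosedEmbedding.comp 
    (g := (Subtype.val : Matrix.unitaryGroup (Fin 2) ℂ → Matrix (Fin 2) (Fin 2) ℂ))
    (f := (Subtype.val : SU2 → Matrix.unitaryGroup (Fin 2) ℂ)) ?_ ?_
  · refine Topology.IsClosedEmbedding.subtypeVal ?_
    have : {x : Matrix (Fin 2) (Fin 2) ℂ | x ∈ Matrix.unitaryGroup (Fin 2) ℂ}
        = {x | star x * x = 1} := by
      ext x; exact Matrix.mem_unitaryGroup_iff'
    rw [this]
    exact isClosed_eq (by fun_prop) continuous_const
  · refine Topology.IsClosedEmbedding.subtypeVal ?_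
    exact isClosed_eq (f := fun g : Matrix.unitaryGroup (Fin 2) ℂ =>
      (g : Matrix (Fin 2) (Fin 2) ℂ).det) (continuous_subtype_val.matrix_det) continuous_const

instance compactSpace_SU2 : CompactSpace SU2 := by
  have hK : IsCompact (Set.pi Set.univ fun _ : Fin 2 => Set.pi Set.univ fun _ : Fin 2 =>
      Metric.closedBall (0 : ℂ) 1) :=
    isCompact_univ_pi fun _ => isCompact_univ_pi fun _ => isCompact_closedBall 0 1
  have h := isClosedEmbedding_su2Mat.isCompact_preimage hK
  rw [← isCompact_univ_iff]
  convert h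
  symm
  rw [Set.eq_univ_iff_forall]
  intro g i _ j _
  simp only [mem_closedBall_zero_iff]
  exact entry_norm_bound_of_unitary g.1.2 i j

theorem su2_integral_mul_right [MeasurableSpace SU2] [BorelSpace SU2]
    (μ : Measure SU2) [μ.IsHaarMeasure] [IsProbabilityMeasure μ] (f : SU2 → ℂ) (h : SU2) :
    ∫ g, f (g * h) ∂μ = ∫ g, f g ∂μ := by
  have : μ.IsMulRightInvariant := ⟨fun g => by
    have : IsProbabilityMeasure (μ.map (· * g)) :=
      Measure.isProbabilityMeasure_map (measurable_mul_const g).aemeasurable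
    exact Measure.isHaarMeasure_eq_of_isProbabilityMeasure _ _⟩
  exact integral_mul_right_eq_self f h

/-- The standard parametrization of `SU(2)`. -/
def su2Mk (a b : ℂ) (h : a * conj a + b * conj b = 1) : SU2 :=
  ⟨⟨!![a, -conj b; b, conj a], by
    rw [Matrix.mem_unitaryGroup_iff]
    ext i j
    fin_cases i <;> fin_cases j <;>
      simp [Matrix.mul_apply, Fin.sum_univ_two, Matrix.star_apply] <;>
      first
        | linear_combination h
        | ring⟩, by
    show Matrix.det !![a, -conj b; b, conj a] = 1
    rw [Matrix.det_fin_two_of]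
    linear_combination h⟩

theorem su2Mat_mk (a b : ℂ) (h) : su2Mat (su2Mk a b h) = !![a, -conj b; b, conj a] := rfl

/-- The integral with a general entry of the first row. -/
def auxInt [MeasurableSpace SU2] (μ : Measure SU2) (m n : ℕ) (j : Fin 2) (x y : ℂ) : ℂ :=
  ∫ g : SU2, conj (su2Mat g 0 j) *
        (su2Mat g 0 0 * x + su2Mat g 0 1 * y) ^ m *
        (su2Mat g 1 0 * x + su2Mat g 1 1 * y) ^ n ∂μ

theorem auxInt_homog [MeasurableSpace SU2] (μ : Measure SU2) (m n : ℕ) (j : Fin 2) (a r : ℂ) :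
    auxInt μ m n j (a * r) 0 = a ^ (m + n) * auxInt μ m n j r 0 := by
  unfold auxInt
  rw [← integral_const_mul]
  congr 1
  ext g
  simp only [mul_zero, add_zero, mul_pow, pow_add]
  ring

theorem auxInt_transform [MeasurableSpace SU2] [BorelSpace SU2]
    (μ : Measure SU2) [μ.IsHaarMeasure] [IsProbabilityMeasure μ]
    (m n : ℕ) (j : Fin 2) (x y : ℂ) (h : SU2) :
    auxInt μ m n j x y =
      conj (su2Mat h 0 j) * auxInt μ m n 0 (su2Mat h 0 0 * x + su2Mat h 0 1 * y)
        (su2Mat h 1 0 * x + su2Mat h 1 1 * y) +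
      conj (su2Mat h 1 j) * auxInt μ m n 1 (su2Mat h 0 0 * x + su2Mat h 0 1 * y)
        (su2Mat h 1 0 * x + su2Mat h 1 1 * y) := by
  unfold auxInt
  have hc := continuous_su2Mat_apply
  have hint : ∀ (k : Fin 2) (u v : ℂ), Integrable (fun g : SU2 => conj (su2Mat g 0 k) *
        (su2Mat g 0 0 * u + su2Mat g 0 1 * v) ^ m *
        (su2Mat g 1 0 * u + su2Mat g 1 1 * v) ^ n) μ := by
    intro k u v
    refine Continuous.integrable_of_hasCompactSupport ?_ (HasCompactSupport.of_compactSpace _)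
    have h0 := hc 0 0
    have h1 := hc 0 1
    have h2 := hc 1 0
    have h3 := hc 1 1
    have h4 : Continuous fun g => conj (su2Mat g 0 k) := Complex.continuous_conj.comp (hc 0 k)
    fun_prop
  rw [← su2_integral_mul_right μ _ h, ← integral_const_mul, ← integral_const_mul,
    ← integral_add ((hint _ _ _).const_mul _) ((hint _ _ _).const_mul _)]
  congr 1
  ext g
  simp only [su2Mat_mul, Matrix.mul_apply, Fin.sum_univ_two, map_add, map_mul]
  ring

theorem exists_unit_pow (t : ℝ) (ht : t ≠ 0) :
    ∃ θ : ℝ, Complex.exp ((t * θ : ℝ) * Complex.I) = -1 := by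
  refine ⟨Real.pi / t, ?_⟩
  rw [mul_div_cancel₀ _ ht, Complex.exp_pi_mul_I]

theorem conj_exp_mul_I (θ : ℝ) :
    conj (Complex.exp (θ * Complex.I)) = Complex.exp (-(θ * Complex.I)) := by
  rw [← Complex.exp_conj]
  simp

theorem exp_unit (θ : ℝ) : Complex.exp (θ * Complex.I) * conj (Complex.exp (θ * Complex.I))
    + 0 * conj 0 = 1 := by
  rw [conj_exp_mul_I, ← Complex.exp_add]
  simp

theorem auxInt_zero [MeasurableSpace SU2] [BorelSpace SU2]
    (μ : Measure SU2) [μ.IsHaarMeasure] [IsProbabilityMeasure μ]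
    (m n : ℕ) (hmn : m + n ≠ 1) (r : ℂ) : auxInt μ m n 0 r 0 = 0 := by
  obtain ⟨θ, hθ⟩ := exists_unit_pow ((m + n : ℕ) - 1 : ℝ)
    (sub_ne_zero.2 (by exact_mod_cast hmn))
  have h := auxInt_transform μ m n 0 r 0 (su2Mk _ _ (exp_unit θ))
  simp only [su2Mat_mk, Matrix.of_apply, Matrix.cons_val_zero, Matrix.cons_val_one,
    Matrix.cons_val', map_zero, zero_mul, mul_zero, add_zero, neg_zero] at h
  rw [auxInt_homog, conj_exp_mul_I, ← Complex.exp_nat_mul, ← mul_assoc, ← Complex.exp_add] at h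
  have e : -(θ * Complex.I) + ((m + n : ℕ) : ℂ) * (θ * Complex.I)
      = ((((m + n : ℕ) - 1 : ℝ) * θ : ℝ) : ℂ) * Complex.I := by
    push_cast; ring
  rw [e, hθ] at h
  linear_combination h / 2

theorem auxInt_one [MeasurableSpace SU2] [BorelSpace SU2]
    (μ : Measure SU2) [μ.IsHaarMeasure] [IsProbabilityMeasure μ]
    (m n : ℕ) (r : ℂ) : auxInt μ m n 1 r 0 = 0 := by
  obtain ⟨θ, hθ⟩ := exists_unit_pow ((m + n : ℕ) + 1 : ℝ) (by positivity)
  have h := auxInt_transform μ m n 1 r 0 (su2Mk _ _ (exp_unit θ))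
  simp only [su2Mat_mk, Matrix.of_apply, Matrix.cons_val_zero, Matrix.cons_val_one,
    Matrix.cons_val', map_zero, zero_mul, mul_zero, add_zero, zero_add, neg_zero,
    Complex.conj_conj] at h
  rw [auxInt_homog, ← Complex.exp_nat_mul, ← mul_assoc, ← Complex.exp_add] at h
  have e : (θ * Complex.I) + ((m + n : ℕ) : ℂ) * (θ * Complex.I)
      = ((((m + n : ℕ) + 1 : ℝ) * θ : ℝ) : ℂ) * Complex.I := by
    push_cast; ring
  rw [e, hθ] at h
  linear_combination h / 2

/-- The Haar average over `SU(2)` of `conj(g₀₀)·(g₀₀x+g₀₁y)^m·(g₁₀x+g₁₁y)^n` vanishes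
whenever `m + n ≠ 1`. -/
theorem haar_integral_eq_zero [MeasurableSpace SU2] [BorelSpace SU2]
    (μ : Measure SU2) [μ.IsHaarMeasure] [IsProbabilityMeasure μ]
    (m n : ℕ) (hmn : m + n ≠ 1) (x y : ℂ) :
    ∫ g : SU2, conj (su2Mat g 0 0) *
        (su2Mat g 0 0 * x + su2Mat g 0 1 * y) ^ m *
        (su2Mat g 1 0 * x + su2Mat g 1 1 * y) ^ n ∂μ = 0 := by
  change auxInt μ m n 0 x y = 0
  by_cases hy : y = 0
  · rw [hy]; exact auxInt_zero μ m n hmn x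
  have hpos : 0 < Complex.normSq x + Complex.normSq y :=
    add_pos_of_nonneg_of_pos (Complex.normSq_nonneg x) (Complex.normSq_pos.2 hy)
  obtain ⟨r, hr, hr2⟩ : ∃ r : ℝ, r ≠ 0 ∧ r ^ 2 = Complex.normSq x + Complex.normSq y :=
    ⟨√(Complex.normSq x + Complex.normSq y), (Real.sqrt_pos.2 hpos).ne', Real.sq_sqrt hpos.le⟩
  have hrc : (r : ℂ) ≠ 0 := by exact_mod_cast hr
  have hr2c : (r : ℂ) ^ 2 = x * conj x + y * conj y := by
    rw [Complex.mul_conj, Complex.mul_conj]; exact_mod_cast hr2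
  have hu : (conj x / r) * conj (conj x / (r : ℂ)) + (-y / r) * conj (-y / (r : ℂ)) = 1 := by
    simp only [map_div₀, map_neg, Complex.conj_conj, Complex.conj_ofReal]
    field_simp
    linear_combination -hr2c
  rw [auxInt_transform μ m n 0 x y (su2Mk _ _ hu)]
  have e : su2Mat (su2Mk _ _ hu) 1 0 * x + su2Mat (su2Mk _ _ hu) 1 1 * y = 0 := by
    simp [su2Mat_mk]
    field_simp
    ring
  rw [e, auxInt_zero μ m n hmn, auxInt_one]
  simp

end
end

section
/- Let m ≥ 1 be an integer and ω = exp(2πi/m). Then (1/m) ∑_{p=0}^{m−1} ∑_{q=0}^{m−1} ω^{−pq} · (P_ω^p ⊗ P_ω^q) = CP_ω, where P_ω is the 2×2 diagonal matrix diag(1, ω), ⊗ denotes the Kronecker product of 2×2 complex matrices, and CP_ω is the 4×4 diagonal matrix diag(1, 1, 1, ω). -/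
open Matrix
open scoped Kronecker

noncomputable section

theorem crot_inner (m : ℕ) (hm : 1 ≤ m) (ω : ℂ) (h : IsPrimitiveRoot ω m) (k : ℤ) :
    ∑ q ∈ Finset.range m, (ω ^ k) ^ q = if (m : ℤ) ∣ k then (m : ℂ) else 0 := by
  split_ifs with hk
  · rw [(h.zpow_eq_one_iff_dvd k).2 hk]; simp
  · have h1 : ω ^ k ≠ 1 := fun e => hk ((h.zpow_eq_one_iff_dvd k).1 e)
    rw [geom_sum_eq h1]
    have : (ω ^ k) ^ m = 1 := by
      rw [← zpow_natCast, ← _root_.zpow_mul, mul_comm, _root_.zpow_mul, zpow_natCast, h.pow_eq_one, _root_.one_zpow]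
    simp [this]

theorem crot_sum (m : ℕ) (hm : 1 ≤ m) (ω : ℂ) (h : IsPrimitiveRoot ω m) (a b : ℕ) :
    (m : ℂ)⁻¹ * ∑ p ∈ Finset.range m, ∑ q ∈ Finset.range m,
      ω ^ (-(p * q : ℤ)) * ((ω ^ a) ^ p * (ω ^ b) ^ q) = ω ^ (a * b) := by
  have h0 : ω ≠ 0 := h.ne_zero (by omega)
  have hmC : (m : ℂ) ≠ 0 := by exact_mod_cast (by omega : m ≠ 0)
  have h1 : ∀ p ∈ Finset.range m, ∑ q ∈ Finset.range m,
      ω ^ (-(p * q : ℤ)) * ((ω ^ a) ^ p * (ω ^ b) ^ q)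
      = if b % m = p then (ω ^ a) ^ p * m else 0 := by
    intro p hp
    have hp' := Finset.mem_range.1 hp
    have : ∀ q ∈ Finset.range m, ω ^ (-(p * q : ℤ)) * ((ω ^ a) ^ p * (ω ^ b) ^ q)
        = (ω ^ a) ^ p * (ω ^ ((b : ℤ) - p)) ^ q := by
      intro q _
      have : (ω ^ ((b : ℤ) - p)) ^ q = ω ^ (-(p * q : ℤ)) * (ω ^ b) ^ q := by
        rw [← zpow_natCast, ← _root_.zpow_mul, ← pow_mul, ← zpow_natCast ω (b * q), ← zpow_add₀ h0]
        congr 1; push_cast; ring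
      rw [this]; ring
    rw [Finset.sum_congr rfl this, ← Finset.mul_sum, crot_inner m hm ω h]
    have e : ((m : ℤ) ∣ (b : ℤ) - p) ↔ b % m = p := by
      rw [← Nat.modEq_iff_dvd, Nat.ModEq, Nat.mod_eq_of_lt hp', eq_comm]
    simp only [e, mul_ite, mul_zero]
  rw [Finset.sum_congr rfl h1, Finset.sum_ite_eq,
    if_pos (Finset.mem_range.2 (Nat.mod_lt _ (by omega)))]
  have : (ω ^ a) ^ (b % m) = ω ^ (a * b) := by
    rw [pow_mul]
    conv_rhs => rw [← Nat.div_add_mod b m, pow_add, pow_mul, ← pow_mul ω a m, mul_comm a m,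
      pow_mul ω m a, h.pow_eq_one, one_pow, one_pow, one_mul]
  rw [this]; field_simp

/-- `(1/m) ∑_{p,q=0}^{m-1} ω^{-pq} (P_ω^p ⊗ P_ω^q) = CP_ω` where `ω = e^{2πi/m}`,
`P_ω = diag(1, ω)` and `CP_ω = diag(1,1,1,ω)`. -/
theorem crot_implements_controlled_phase (m : ℕ) (hm : 1 ≤ m) (ω : ℂ)
    (hω : ω = Complex.exp (2 * Real.pi * Complex.I / m)) :
    ((m : ℂ))⁻¹ • ∑ p ∈ Finset.range m, ∑ q ∈ Finset.range m,
        ω ^ (-(p * q : ℤ)) • ((!![1, 0; 0, ω] ^ p) ⊗ₖ (!![1, 0; 0, ω] ^ q)) =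
      Matrix.diagonal (fun ab : Fin 2 × Fin 2 => if ab.1 = 1 ∧ ab.2 = 1 then ω else 1) := by
  have h : IsPrimitiveRoot ω m := hω ▸ Complex.isPrimitiveRoot_exp m (by omega)
  have hP : (!![1, 0; 0, ω] : Matrix (Fin 2) (Fin 2) ℂ)
      = Matrix.diagonal (fun i : Fin 2 => ω ^ (i : ℕ)) := by
    ext i j; fin_cases i <;> fin_cases j <;> simp
  rw [hP]
  simp only [Matrix.diagonal_pow, Matrix.diagonal_kronecker_diagonal]
  ext ⟨a, b⟩ ⟨c, d⟩
  by_cases e : (a, b) = (c, d)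
  · rw [← e]
    simp only [Matrix.smul_apply, Matrix.sum_apply, Matrix.diagonal_apply_eq, smul_eq_mul,
      Pi.pow_apply]
    rw [crot_sum m hm ω h]
    fin_cases a <;> fin_cases b <;> simp
  · simp only [Matrix.smul_apply, Matrix.sum_apply, Matrix.diagonal_apply_ne _ e, smul_eq_mul,
      mul_zero, Finset.sum_const_zero]

end
end

section
/- Let H = (1/√2)·[[1, 1], [1, −1]] and S = [[1, 0], [0, i]] in the unitary group U(2), and let G be the subgroup of U(2) generated by H and S. Then G is finite and is a unitary 1-design: for every 2×2 complex matrix A, (1/|G|) ∑_{g∈G} g A g† = (tr(A)/2)·1. -/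
noncomputable section

def CT (s : ℂ) (M : Matrix (Fin 2) (Fin 2) ℂ) : Prop :=
  ∃ c u v : ℂ, c ^ 8 = 1 ∧ u ^ 4 = 1 ∧ v ^ 4 = 1 ∧
    (M = !![c, 0; 0, c * u] ∨ M = !![0, c; c * u, 0] ∨
      M = !![s * c, s * c * u; s * c * v, -(s * c * u * v)])

lemma CT_finite (s : ℂ) : {M | CT s M}.Finite := by
  have h (n : ℕ) (hn : 0 < n) : {c : ℂ | c ^ n = 1}.Finite := by
    refine Set.Finite.subset (Polynomial.nthRoots n (1 : ℂ)).toFinset.finite_toSet ?_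
    intro c hc
    simpa [Polynomial.mem_nthRoots hn] using hc
  have h8 := h 8 (by norm_num)
  have h4 := h 4 (by norm_num)
  have hp := h8.prod (h4.prod h4)
  refine Set.Finite.subset
    (((hp.image (fun p => (!![p.1, 0; 0, p.1 * p.2.1] : Matrix (Fin 2) (Fin 2) ℂ))).union
    (hp.image (fun p => (!![0, p.1; p.1 * p.2.1, 0] : Matrix (Fin 2) (Fin 2) ℂ)))).union
    (hp.image (fun p => (!![s * p.1, s * p.1 * p.2.1; s * p.1 * p.2.2,
      -(s * p.1 * p.2.1 * p.2.2)] : Matrix (Fin 2) (Fin 2) ℂ)))) ?_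
  rintro M ⟨c, u, v, hc, hu, hv, h | h | h⟩
  · exact Or.inl (Or.inl ⟨(c, u, v), ⟨hc, hu, hv⟩, h.symm⟩)
  · exact Or.inl (Or.inr ⟨(c, u, v), ⟨hc, hu, hv⟩, h.symm⟩)
  · exact Or.inr ⟨(c, u, v), ⟨hc, hu, hv⟩, h.symm⟩

lemma CT_S (s : ℂ) (M : Matrix (Fin 2) (Fin 2) ℂ) (h : CT s M) :
    CT s (!![1, 0; 0, Complex.I] * M) := by
  have hI : Complex.I ^ 4 = 1 := Complex.I_pow_four
  obtain ⟨c, u, v, hc, hu, hv, rfl | rfl | rfl⟩ := h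
  · refine ⟨c, Complex.I * u, 1, hc, by rw [mul_pow, hI, hu, one_mul], by simp, Or.inl ?_⟩
    ext i j; fin_cases i <;> fin_cases j <;> simp [Matrix.mul_apply] <;> ring
  · refine ⟨c, Complex.I * u, 1, hc, by rw [mul_pow, hI, hu, one_mul], by simp, Or.inr (Or.inl ?_)⟩
    ext i j; fin_cases i <;> fin_cases j <;> simp [Matrix.mul_apply] <;> ring
  · refine ⟨c, u, Complex.I * v, hc, hu, by rw [mul_pow, hI, hv, one_mul], Or.inr (Or.inr ?_)⟩
    ext i j; fin_cases i <;> fin_cases j <;> simp [Matrix.mul_apply] <;> ring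

lemma CT_H (s : ℂ) (hs : s ^ 2 = 1 / 2) (M : Matrix (Fin 2) (Fin 2) ℂ) (h : CT s M) :
    CT s (s • !![1, 1; 1, -1] * M) := by
  have hI : Complex.I ^ 2 = -1 := Complex.I_sq
  have hI4 : Complex.I ^ 4 = 1 := Complex.I_pow_four
  obtain ⟨c, u, v, hc, hu, hv, rfl | rfl | rfl⟩ := h
  · refine ⟨c, u, 1, hc, hu, by simp, Or.inr (Or.inr ?_)⟩
    ext i j; fin_cases i <;> fin_cases j <;> simp [Matrix.mul_apply] <;> ring
  · refine ⟨c * u, u ^ 3, -1, by linear_combination u ^ 8 * hc + (u ^ 4 + 1) * hu,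
      by linear_combination (u ^ 8 + u ^ 4 + 1) * hu, by norm_num, Or.inr (Or.inr ?_)⟩
    ext i j; fin_cases i <;> fin_cases j <;> simp [Matrix.mul_apply] <;>
      first | ring1 | linear_combination (s * c) * hu | linear_combination (-s * c) * hu
  · have hv' : (v - 1) * ((v + 1) * ((v - Complex.I) * (v + Complex.I))) = 0 := by
      linear_combination hv - (v ^ 2 - 1) * hI
    have w8 (e : ℂ) (he : e ^ 2 = -1) : (c * (s * (1 + e))) ^ 8 = 1 := by
      have : (s * (1 + e)) ^ 2 = e := by linear_combination (1 + e) ^ 2 * hs + he / 2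
      rw [mul_pow, hc, show (s * (1 + e)) ^ 8 = (((s * (1 + e)) ^ 2) ^ 2) ^ 2 by ring, this, he]
      norm_num
    have key (e : ℂ) (he : e ^ 2 = -1) (hve : v = e) :
        CT s (s • !![1, 1; 1, -1] *
          !![s * c, s * c * u; s * c * v, -(s * c * u * v)]) := by
      subst hve
      have e4 : v ^ 4 = 1 := hv
      refine ⟨c * (s * (1 + v)), -v * u, -v, w8 v he, by linear_combination u ^ 4 * hv + hu,
        by linear_combination hv, Or.inr (Or.inr ?_)⟩
      ext i j; fin_cases i <;> fin_cases j <;> simp [Matrix.mul_apply] <;>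
        first
        | ring1
        | linear_combination (s ^ 2 * c) * he
        | linear_combination (-s ^ 2 * c) * he
        | linear_combination (s ^ 2 * c * u) * he
        | linear_combination (-s ^ 2 * c * u) * he
        | linear_combination (s ^ 2 * c * u * (1 + v)) * he
        | linear_combination (-s ^ 2 * c * u * (1 + v)) * he
    rcases mul_eq_zero.1 hv' with h | h
    · obtain rfl : v = 1 := by linear_combination h
      refine ⟨c, u, 1, hc, hu, by simp, Or.inl ?_⟩
      ext i j; fin_cases i <;> fin_cases j <;> simp [Matrix.mul_apply] <;>
        first | ring1 | linear_combination (2 * c) * hs | linear_combination (2 * c * u) * hs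
    rcases mul_eq_zero.1 h with h | h
    · obtain rfl : v = -1 := by linear_combination h
      refine ⟨c * u, u ^ 3, 1, by linear_combination u ^ 8 * hc + (u ^ 4 + 1) * hu,
        by linear_combination (u ^ 8 + u ^ 4 + 1) * hu, by simp, Or.inr (Or.inl ?_)⟩
      ext i j; fin_cases i <;> fin_cases j <;> simp [Matrix.mul_apply] <;>
        first | ring1 | linear_combination (2 * c * u) * hs | linear_combination (2 * c) * hs - c * hu
    rcases mul_eq_zero.1 h with h | h
    · exact key Complex.I hI (by linear_combination h)
    · exact key (-Complex.I) (by linear_combination hI) (by linear_combination h)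

/-- The subgroup of `U(2)` generated by the Hadamard gate `H` and the phase gate `S` is finite
and is a unitary 1-design. -/
theorem clifford_group_one_design (H S : Matrix.unitaryGroup (Fin 2) ℂ)
    (hH : (H : Matrix (Fin 2) (Fin 2) ℂ) = ((Real.sqrt 2 : ℂ))⁻¹ • !![1, 1; 1, -1])
    (hS : (S : Matrix (Fin 2) (Fin 2) ℂ) = !![1, 0; 0, Complex.I]) :
    Finite (Subgroup.closure {H, S} : Subgroup (Matrix.unitaryGroup (Fin 2) ℂ)) ∧
    ∀ A : Matrix (Fin 2) (Fin 2) ℂ,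
      ((Nat.card (Subgroup.closure {H, S} : Subgroup (Matrix.unitaryGroup (Fin 2) ℂ)) : ℂ))⁻¹ •
          ∑ᶠ g : (Subgroup.closure {H, S} : Subgroup (Matrix.unitaryGroup (Fin 2) ℂ)),
            gMat g * A * star (gMat g) =
        (A.trace / 2) • 1 := by
  have hs : ((Real.sqrt 2 : ℂ))⁻¹ ^ 2 = 1 / 2 := by
    rw [inv_pow, ← Complex.ofReal_pow, Real.sq_sqrt (by norm_num)]; norm_num
  have hs0 : ((Real.sqrt 2 : ℂ))⁻¹ ≠ 0 := by
    intro h; rw [h] at hs; norm_num at hs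
  generalize ((Real.sqrt 2 : ℂ))⁻¹ = s at hH hs hs0
  have hHi : H⁻¹ = H := by
    rw [inv_eq_iff_mul_eq_one]
    apply Subtype.ext
    rw [Submonoid.coe_mul, hH]
    ext i j; fin_cases i <;> fin_cases j <;> simp [Matrix.mul_apply] <;>
      linear_combination 2 * hs
  have hSi : S⁻¹ = S * S * S := by
    rw [inv_eq_iff_mul_eq_one]
    apply Subtype.ext
    simp only [Submonoid.coe_mul, hS]
    ext i j; fin_cases i <;> fin_cases j <;> simp [Matrix.mul_apply]
  have hmem : ∀ g ∈ Subgroup.closure {H, S}, CT s (g : Matrix (Fin 2) (Fin 2) ℂ) := by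
    intro g hg
    have hSm : ∀ y : Matrix.unitaryGroup (Fin 2) ℂ, CT s (y : Matrix (Fin 2) (Fin 2) ℂ) →
        CT s ((S * y : Matrix.unitaryGroup (Fin 2) ℂ) : Matrix (Fin 2) (Fin 2) ℂ) := by
      intro y hy
      rw [Submonoid.coe_mul, hS]; exact CT_S s _ hy
    have hHm : ∀ y : Matrix.unitaryGroup (Fin 2) ℂ, CT s (y : Matrix (Fin 2) (Fin 2) ℂ) →
        CT s ((H * y : Matrix.unitaryGroup (Fin 2) ℂ) : Matrix (Fin 2) (Fin 2) ℂ) := by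
      intro y hy
      rw [Submonoid.coe_mul, hH]; exact CT_H s hs _ hy
    induction hg using Subgroup.closure_induction_left with
    | one =>
      refine ⟨1, 1, 1, by simp, by simp, by simp, Or.inl ?_⟩
      ext i j; fin_cases i <;> fin_cases j <;> simp
    | mul_left x hx y hy ih =>
      rcases hx with rfl | rfl
      · exact hHm _ ih
      · exact hSm _ ih
    | inv_mul_cancel x hx y hy ih =>
      rcases hx with rfl | rfl
      · rw [hHi]; exact hHm _ ih
      · rw [hSi, mul_assoc, mul_assoc]; exact hSm _ (hSm _ (hSm _ ih))
  have hfin : Finite (Subgroup.closure {H, S} : Subgroup (Matrix.unitaryGroup (Fin 2) ℂ)) := by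
    have : Finite {M // CT s M} := (CT_finite s).to_subtype
    refine Finite.of_injective (β := {M // CT s M}) (fun g => ⟨gMat g, hmem g.1 g.2⟩) ?_
    intro a b hab
    have h2 : gMat a = gMat b := congrArg (fun x : {M // CT s M} => x.1) hab
    exact Subtype.ext (Subtype.ext h2)
  refine ⟨hfin, fun A => ?_⟩
  have hHG : H ∈ Subgroup.closure {H, S} := Subgroup.subset_closure (by simp)
  have hSG : S ∈ Subgroup.closure {H, S} := Subgroup.subset_closure (by simp)
  generalize Subgroup.closure {H, S} = G at *
  have := Fintype.ofFinite G
  rw [finsum_eq_sum_of_fintype, Nat.card_eq_fintype_card]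
  have hstar (g : G) : star (gMat g) * gMat g = 1 := (Matrix.mem_unitaryGroup_iff').1 g.1.2
  have hmul (g h : G) : gMat (g * h) = gMat g * gMat h := rfl
  set P : Matrix (Fin 2) (Fin 2) ℂ := ∑ g : G, gMat g * A * star (gMat g) with hP
  have hcomm (h : G) : gMat h * P = P * gMat h := by
    have h1 : gMat h * P * star (gMat h) = P := by
      conv_rhs => rw [hP, ← Equiv.sum_comp (Equiv.mulLeft h)]
      rw [hP, Finset.mul_sum, Finset.sum_mul]
      refine Finset.sum_congr rfl fun g _ => ?_
      simp only [Equiv.coe_mulLeft, hmul, star_mul, mul_assoc]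
    conv_rhs => rw [← h1]
    rw [mul_assoc _ _ (gMat h), hstar, mul_one]
  have htr : P.trace = Fintype.card G * A.trace := by
    rw [hP, Matrix.trace_sum]
    have : ∀ g : G, (gMat g * A * star (gMat g)).trace = A.trace := by
      intro g
      rw [Matrix.trace_mul_comm, ← mul_assoc, hstar, one_mul]
    simp [this]
  have c1 := hcomm ⟨S, hSG⟩
  have c2 := hcomm ⟨H, hHG⟩
  simp only [gMat, hS] at c1
  simp only [gMat, hH] at c2
  clear_value P
  have hI : (Complex.I - 1) ≠ 0 := by
    intro h; simpa using congrArg Complex.re h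
  have a01 : P 0 1 = 0 := by
    have := congrFun (congrFun c1 0) 1
    simp [Matrix.mul_apply] at this
    refine (mul_eq_zero.1 (?_ : (Complex.I - 1) * P 0 1 = 0)).resolve_left hI
    linear_combination -this
  have a10 : P 1 0 = 0 := by
    have := congrFun (congrFun c1 1) 0
    simp [Matrix.mul_apply] at this
    refine (mul_eq_zero.1 (?_ : (Complex.I - 1) * P 1 0 = 0)).resolve_left hI
    linear_combination this
  have a11 : P 0 0 = P 1 1 := by
    have := congrFun (congrFun c2 0) 1
    simp [Matrix.mul_apply, a01] at this
    grind
  rw [Matrix.trace_fin_two] at htr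
  have hc : (Fintype.card G : ℂ) ≠ 0 := by exact_mod_cast Fintype.card_ne_zero
  have e1 : (Fintype.card G : ℂ)⁻¹ * P 1 1 = A.trace / 2 := by
    field_simp
    linear_combination htr - a11
  ext i j; fin_cases i <;> fin_cases j <;> simp [a01, a10, a11, e1]

end
end

section
/- Let θ ∈ ℝ with cos θ ≠ 1 and cos θ ≠ −1, and let j, j' ∈ {0, 1}. Then the normalized overlap of the two-component cat states of amplitudes r·e^{iθ} and r tends to zero at large energy: ⟨c_j(r·e^{iθ}), c_{j'}(r)⟩ / (‖c_j(r·e^{iθ})‖ · ‖c_{j'}(r)‖) → 0 as the real parameter r → +∞ (the denominators being nonzero for r > 0). -/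
open scoped ComplexConjugate ComplexInnerProductSpace

noncomputable section

/-- The coefficient sequence of the coherent state `|α⟩`:
`n ↦ exp(−|α|²/2)·αⁿ/√(n!)`. -/
def coh (α : ℂ) : ℕ → ℂ :=
  fun n => Complex.exp (-((‖α‖ : ℂ)) ^ 2 / 2) * α ^ n / (Real.sqrt n.factorial : ℂ)

/-- The coefficient sequence of the unnormalized two-component cat state
`c_k(γ) = |γ⟩ + (−1)^k |−γ⟩`. -/
def catf (k : ℕ) (γ : ℂ) : ℕ → ℂ :=
  fun n => coh γ n + (-1 : ℂ) ^ k * coh (-γ) n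

theorem coh_term (α β : ℂ) (n : ℕ) : inner ℂ (coh α n) (coh β n) =
    (Complex.exp (-((‖α‖ : ℂ)) ^ 2 / 2) * Complex.exp (-((‖β‖ : ℂ)) ^ 2 / 2)) *
      ((conj α * β) ^ n / (n.factorial : ℂ)) := by
  have hs : ((Real.sqrt n.factorial : ℝ) : ℂ) * (Real.sqrt n.factorial : ℝ) = (n.factorial : ℂ) := by
    rw [← Complex.ofReal_mul, Real.mul_self_sqrt (by positivity)]; simp
  have hc : conj (Complex.exp (-((‖α‖ : ℂ)) ^ 2 / 2)) = Complex.exp (-((‖α‖ : ℂ)) ^ 2 / 2) := by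
    rw [← Complex.exp_conj]; simp [map_ofNat]
  rw [← hs]
  simp only [coh, RCLike.inner_apply, map_mul, map_div₀, map_pow, hc, Complex.conj_ofReal, mul_pow]
  ring

theorem coh_hasSum (α β : ℂ) : HasSum (fun n => (inner ℂ (coh α n) (coh β n) : ℂ))
    ((Complex.exp (-((‖α‖ : ℂ)) ^ 2 / 2) * Complex.exp (-((‖β‖ : ℂ)) ^ 2 / 2)) *
      Complex.exp (conj α * β)) := by
  simp only [coh_term]
  refine HasSum.mul_left _ ?_
  have := NormedSpace.expSeries_div_hasSum_exp (conj α * β)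
  rwa [← Complex.exp_eq_exp_ℂ] at this

theorem coh_mem (α : ℂ) : Memℓp (coh α) 2 := by
  refine memℓp_gen ?_
  have h := (coh_hasSum α α).summable.norm
  refine h.congr fun n => ?_
  rw [inner_self_eq_norm_sq_to_K]
  simp

/-- The coherent state as a vector. -/
def cohv (α : ℂ) : lp (fun _ : ℕ => ℂ) 2 := ⟨coh α, coh_mem α⟩

theorem cohv_inner (α β : ℂ) : inner ℂ (cohv α) (cohv β) =
    (Complex.exp (-((‖α‖ : ℂ)) ^ 2 / 2) * Complex.exp (-((‖β‖ : ℂ)) ^ 2 / 2)) *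
      Complex.exp (conj α * β) := by
  rw [lp.inner_eq_tsum]
  exact (coh_hasSum α β).tsum_eq

theorem cohv_norm_inner (α β : ℂ) : ‖(inner ℂ (cohv α) (cohv β) : ℂ)‖ =
    Real.exp (-‖α‖ ^ 2 / 2 - ‖β‖ ^ 2 / 2 + (conj α * β).re) := by
  rw [cohv_inner, ← Complex.exp_add, ← Complex.exp_add, Complex.norm_exp]
  congr 1
  have h (x : ℝ) : (-(x : ℂ) ^ 2 / 2).re = -x ^ 2 / 2 := by
    rw [show (-(x : ℂ) ^ 2 / 2) = ((-x ^ 2 / 2 : ℝ) : ℂ) by push_cast; ring, Complex.ofReal_re]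
  rw [Complex.add_re, Complex.add_re, h, h]
  ring

theorem cohv_norm (α : ℂ) : ‖cohv α‖ = 1 := by
  have h := cohv_norm_inner α α
  rw [inner_self_eq_norm_sq_to_K, ← Complex.normSq_eq_conj_mul_self, Complex.ofReal_re,
    Complex.normSq_eq_norm_sq] at h
  rw [show -‖α‖ ^ 2 / 2 - ‖α‖ ^ 2 / 2 + ‖α‖ ^ 2 = 0 by ring, Real.exp_zero] at h
  simp at h
  rcases h with h | h
  · exact h
  · linarith [norm_nonneg (cohv α)]

theorem catf_coe (k : ℕ) (γ : ℂ) :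
    catf k γ = ((cohv γ + (-1 : ℂ) ^ k • cohv (-γ) : lp (fun _ : ℕ => ℂ) 2) : ℕ → ℂ) := by
  ext n
  simp [catf, cohv]
  rfl

theorem catf_mem (k : ℕ) (γ : ℂ) : Memℓp (catf k γ) 2 := by
  rw [catf_coe]; exact lp.memℓp _

theorem catf_eq (k : ℕ) (γ : ℂ) (h : Memℓp (catf k γ) 2) :
    (⟨catf k γ, h⟩ : lp (fun _ : ℕ => ℂ) 2) = cohv γ + (-1 : ℂ) ^ k • cohv (-γ) :=
  Subtype.ext (catf_coe k γ)

theorem cat_norm_sq (k : ℕ) (γ : ℂ) :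
    2 - 2 * Real.exp (-2 * ‖γ‖ ^ 2) ≤ ‖cohv γ + (-1 : ℂ) ^ k • cohv (-γ)‖ ^ 2 := by
  rw [norm_add_sq (𝕜 := ℂ), norm_smul, cohv_norm, cohv_norm]
  have h : ‖(inner ℂ (cohv γ) ((-1 : ℂ) ^ k • cohv (-γ)) : ℂ)‖ = Real.exp (-2 * ‖γ‖ ^ 2) := by
    rw [inner_smul_right, norm_mul, cohv_norm_inner, mul_neg,
      ← Complex.normSq_eq_conj_mul_self, Complex.neg_re, Complex.ofReal_re,
      Complex.normSq_eq_norm_sq]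
    simp
    ring
  have h2 := (abs_le.1 (Complex.abs_re_le_norm
    (inner ℂ (cohv γ) ((-1 : ℂ) ^ k • cohv (-γ)) : ℂ))).1
  rw [h] at h2
  simp only [norm_pow, norm_neg, norm_one, one_pow, RCLike.re_eq_complex_re]
  linarith

theorem cat_norm_ne (k : ℕ) (γ : ℂ) (hγ : 0 < ‖γ‖) :
    ‖cohv γ + (-1 : ℂ) ^ k • cohv (-γ)‖ ≠ 0 := by
  intro h0
  have h := cat_norm_sq k γ
  rw [h0] at h
  have : Real.exp (-2 * ‖γ‖ ^ 2) < 1 := by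
    rw [← Real.exp_zero]
    exact Real.exp_lt_exp.2 (by nlinarith)
  linarith

theorem cat_norm_ge (k : ℕ) (γ : ℂ) (hγ : 1 ≤ ‖γ‖) :
    1 ≤ ‖cohv γ + (-1 : ℂ) ^ k • cohv (-γ)‖ := by
  have h := cat_norm_sq k γ
  have h1 : Real.exp (-2 * ‖γ‖ ^ 2) ≤ 1 / 2 := by
    have h3 : 2 * ‖γ‖ ^ 2 + 1 ≤ Real.exp (2 * ‖γ‖ ^ 2) := Real.add_one_le_exp _
    rw [neg_mul, Real.exp_neg, ← one_div]
    apply one_div_le_one_div_of_le <;> nlinarith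
  nlinarith [norm_nonneg (cohv γ + (-1 : ℂ) ^ k • cohv (-γ))]

theorem cat_inner_le (k l : ℕ) (α β : ℂ) :
    ‖(inner ℂ (cohv α + (-1 : ℂ) ^ k • cohv (-α)) (cohv β + (-1 : ℂ) ^ l • cohv (-β)) : ℂ)‖ ≤
      2 * Real.exp (-‖α‖ ^ 2 / 2 - ‖β‖ ^ 2 / 2 + (conj α * β).re) +
      2 * Real.exp (-‖α‖ ^ 2 / 2 - ‖β‖ ^ 2 / 2 - (conj α * β).re) := by
  simp only [inner_add_left, inner_add_right, inner_smul_left, inner_smul_right, mul_add]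
  refine (norm_add_le _ _).trans ((add_le_add (norm_add_le _ _) (norm_add_le _ _)).trans ?_)
  simp only [norm_mul, cohv_norm_inner, norm_neg, map_neg, neg_mul, mul_neg, neg_neg,
    Complex.neg_re, map_pow, norm_pow, map_one, norm_one, one_pow, one_mul, ← sub_eq_add_neg]
  linarith

/-- For `cos θ ≠ ±1`, the normalized overlap of the cat states of amplitudes `r·e^{iθ}` and `r`
tends to `0` as `r → +∞`, the norms in the denominator being nonzero for `r > 0`. -/
theorem cat_overlap_tendsto_zero (θ : ℝ) (h1 : Real.cos θ ≠ 1) (h2 : Real.cos θ ≠ -1)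
    (j j' : Fin 2) :
    ∃ h : ∀ (k : ℕ) (γ : ℂ), Memℓp (catf k γ) 2,
      (∀ r : ℝ, 0 < r →
        ‖(⟨catf j ((r : ℂ) * Complex.exp (θ * Complex.I)),
            h j ((r : ℂ) * Complex.exp (θ * Complex.I))⟩ : lp (fun _ : ℕ => ℂ) 2)‖ ≠ 0 ∧
        ‖(⟨catf j' (r : ℂ), h j' (r : ℂ)⟩ : lp (fun _ : ℕ => ℂ) 2)‖ ≠ 0) ∧
      Filter.Tendsto (fun r : ℝ =>
          (⟪(⟨catf j ((r : ℂ) * Complex.exp (θ * Complex.I)),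
              h j ((r : ℂ) * Complex.exp (θ * Complex.I))⟩ : lp (fun _ : ℕ => ℂ) 2),
            (⟨catf j' (r : ℂ), h j' (r : ℂ)⟩ : lp (fun _ : ℕ => ℂ) 2)⟫ : ℂ) /
          ((‖(⟨catf j ((r : ℂ) * Complex.exp (θ * Complex.I)),
              h j ((r : ℂ) * Complex.exp (θ * Complex.I))⟩ : lp (fun _ : ℕ => ℂ) 2)‖ : ℂ) *
           (‖(⟨catf j' (r : ℂ), h j' (r : ℂ)⟩ : lp (fun _ : ℕ => ℂ) 2)‖ : ℂ)))
        Filter.atTop (nhds 0) := by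
  have hn (r : ℝ) (hr : 0 < r) : ‖(r : ℂ) * Complex.exp (θ * Complex.I)‖ = r := by
    rw [norm_mul, Complex.norm_exp_ofReal_mul_I, Complex.norm_real, Real.norm_of_nonneg hr.le,
      mul_one]
  have hn' (r : ℝ) (hr : 0 < r) : ‖(r : ℂ)‖ = r := by
    rw [Complex.norm_real, Real.norm_of_nonneg hr.le]
  refine ⟨catf_mem, fun r hr => ?_, ?_⟩
  · rw [catf_eq, catf_eq]
    exact ⟨cat_norm_ne _ _ (by rwa [hn r hr]), cat_norm_ne _ _ (by rwa [hn' r hr])⟩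
  · simp only [catf_eq]
    have hre (r : ℝ) : (conj ((r : ℂ) * Complex.exp (θ * Complex.I)) * (r : ℂ)).re =
        r ^ 2 * Real.cos θ := by
      rw [map_mul, Complex.conj_ofReal, mul_right_comm, ← Complex.ofReal_mul,
        Complex.re_ofReal_mul, Complex.conj_re, Complex.exp_ofReal_mul_I_re]
      ring
    have hlim (c : ℝ) (hc : 0 < c) :
        Filter.Tendsto (fun r : ℝ => 2 * Real.exp (-(c * r ^ 2))) Filter.atTop (nhds 0) := by
      have h := Real.tendsto_exp_neg_atTop_nhds_zero.comp
        ((Filter.tendsto_pow_atTop (α := ℝ) (two_ne_zero)).const_mul_atTop hc)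
      simpa using h.const_mul 2
    have c1 : 0 < 1 - Real.cos θ := sub_pos.2 (lt_of_le_of_ne (Real.cos_le_one θ) h1)
    have c2 : 0 < 1 + Real.cos θ := by
      have := lt_of_le_of_ne (Real.neg_one_le_cos θ) h2.symm
      linarith
    have hL := (hlim _ c1).add (hlim _ c2)
    rw [add_zero] at hL
    refine squeeze_zero_norm' ?_ hL
    filter_upwards [Filter.eventually_ge_atTop 1] with r hr
    have hr0 : 0 < r := by linarith
    have hA := cat_norm_ge j _ ((hn r hr0).symm ▸ hr)
    have hB := cat_norm_ge j' _ ((hn' r hr0).symm ▸ hr)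
    have hI := cat_inner_le j j' ((r : ℂ) * Complex.exp (θ * Complex.I)) r
    rw [hre, hn r hr0, hn' r hr0,
      show -r ^ 2 / 2 - r ^ 2 / 2 + r ^ 2 * Real.cos θ = -((1 - Real.cos θ) * r ^ 2) by ring,
      show -r ^ 2 / 2 - r ^ 2 / 2 - r ^ 2 * Real.cos θ = -((1 + Real.cos θ) * r ^ 2) by ring] at hI
    rw [norm_div, norm_mul, Complex.norm_real, Complex.norm_real, norm_norm, norm_norm]
    exact (div_le_self (norm_nonneg _) (one_le_mul_of_one_le_of_one_le hA hB)).trans hI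

end
end
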